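/- Let Ω ⊂ ℝⁿ be open, F : Ω × ℝ≥0 → ℂ be T-periodic in t, piecewise constant in t (i.e., F(I,t) = F_j(I) for τ_{j-1} ≤ t mod T < τ_j with 0 = τ₀ < τ₁ < ⋯ < τ_p, τ_p = T), with each F_j ∈ L¹(Ω). Let φ : Ω × ℝ≥0 → ℝ be such that φ(·,t) is C², and suppose there exists ω ∈ C²(Ω) with ∇ω(I) ≠ 0 for all I ∈ Ω, satisfying (1/t)∫₀^t φ(I,τ)dτ − ω(I) = o(1/t) as t → ∞ uniformly in I. Then lim_{l→∞} (1/l) ∫₀^l ∫_Ω F(I,t) exp(i ∫₀^t φ(I,τ)dτ) dI dt = 0. -/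

import Mathlib

/-!
The classical Riemann–Lebesgue lemma for the phase `t * ω` reduces to its one-dimensional version
on `ℝ`. Since `∇ω ≠ 0`, near each point `a` of `Ω` the map `x ↦ x + (ω x - L x) • v`, where
`L = dω(a)` and `L v = 1`, has derivative the identity at `a` and conjugates `ω` to the linear
form `L`; hence preimages of null sets under `ω` are null (`volume_inter_preimage_eq_zero`).
So for `f ∈ L¹(Ω)` each of the four nonnegative parts of `f` gives a measure whose image under `ω`
has an integrable density on `ℝ`, and `∫_Ω f e^{itω}` is a combination of Fourier transforms of
such densities (`tendsto_integral_mul_exp`).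

Because `|∫₀^t φ - tω| → 0` uniformly, replacing the true phase by `t * ω` costs at most
`ε * ∫ |F_j|` (`norm_integral_mul_exp_sub_le`). The finitely many slices are handled together, so
the spatial integral tends to `0` as `t → ∞` while staying bounded, and its Cesàro means tend
to `0` (`tendsto_cesaro`).

No joint measurability of `φ` is assumed, so the spatial integrand need not be measurable in `I`
and the spatial integral need not be measurable in `t`. In those cases the corresponding Bochner
integral is `0` by convention, which is compatible with all the bounds used.
-/

open MeasureTheory Filter Finset

/-! ### Preimages of null sets -/

/-- The preimage of a null set under a `C²` submersion to `ℝ` is null. -/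
lemma volume_inter_preimage_eq_zero {n : ℕ} {Ω : Set (Fin n → ℝ)} (hΩ : IsOpen Ω)
    {ω : (Fin n → ℝ) → ℝ} (hω : ContDiffOn ℝ 2 ω Ω) (hgrad : ∀ x ∈ Ω, fderiv ℝ ω x ≠ 0)
    {N : Set ℝ} (hNm : MeasurableSet N) (hN : volume N = 0) :
    volume (Ω ∩ ω ⁻¹' N) = 0 := by
  refine measure_null_of_locally_null _ fun a ha => ?_
  set L := fderiv ℝ ω a with hL
  obtain ⟨w, hw⟩ : ∃ w, L w ≠ 0 := by
    by_contra! h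
    exact hgrad a ha.1 (ContinuousLinearMap.ext h)
  set v := (L w)⁻¹ • w with hv
  have hLv : L v = 1 := by simp [hv, hw]
  set Φ : (Fin n → ℝ) → (Fin n → ℝ) := fun x => x + (ω x - L x) • v with hΦ
  have hLΦ : ∀ x, L (Φ x) = ω x := fun x => by simp [hΦ, hLv]
  have hωa : HasStrictFDerivAt ω L a :=
    (hω.contDiffAt (hΩ.mem_nhds ha.1)).hasStrictFDerivAt (by norm_num)
  have hd : HasStrictFDerivAt Φ (ContinuousLinearMap.id ℝ (Fin n → ℝ)) a := by
    have h := (hasStrictFDerivAt_id a).add ((hωa.sub L.hasStrictFDerivAt).smul_const v)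
    refine h.congr_fderiv ?_
    ext x
    simp
  have hdet : ((1 / 2 : NNReal) : ENNReal) <
      ENNReal.ofReal |(ContinuousLinearMap.id ℝ (Fin n → ℝ)).det| := by
    have h1 : (ContinuousLinearMap.id ℝ (Fin n → ℝ)).det = 1 := LinearMap.det_id
    rw [h1, abs_one, ENNReal.ofReal_one]
    exact_mod_cast (by norm_num : (1 / 2 : NNReal) < 1)
  obtain ⟨δ, hδ, hδpos⟩ :=
    ((mul_le_addHaar_image_of_lt_det (volume : Measure (Fin n → ℝ)) _ hdet).and
      self_mem_nhdsWithin).exists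
  obtain ⟨s, hs, hsΦ⟩ := hd.approximates_deriv_on_nhds (Or.inr hδpos)
  have hsurj : Function.Surjective (L : (Fin n → ℝ) →ₗ[ℝ] ℝ) := fun c =>
    ⟨c • v, by simp [hLv]⟩
  have hLN : volume (L ⁻¹' N) = 0 := by
    have h := (ae_comp_linearMap_mem_iff (L : (Fin n → ℝ) →ₗ[ℝ] ℝ) volume volume hsurj
      hNm.compl).2 (by simpa [ae_iff] using hN)
    rw [ae_iff] at h
    refine measure_mono_null (fun x hx => ?_) h
    simpa using hx
  refine ⟨s ∩ (Ω ∩ ω ⁻¹' N), inter_mem (mem_nhdsWithin_of_mem_nhds hs) self_mem_nhdsWithin, ?_⟩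
  have h1 := hδ _ Φ (hsΦ.mono_set (Set.inter_subset_left (t := Ω ∩ ω ⁻¹' N)))
  have h2 : volume (Φ '' (s ∩ (Ω ∩ ω ⁻¹' N))) = 0 := by
    refine measure_mono_null ?_ hLN
    rintro _ ⟨x, hx, rfl⟩
    simpa [hLΦ] using hx.2.2
  rw [h2, nonpos_iff_eq_zero, mul_eq_zero] at h1
  exact h1.resolve_left (by simp)

/-! ### The Riemann–Lebesgue lemma for a phase without critical points -/

/-- Decay of the Fourier transform of an absolutely continuous measure on `ℝ`, by Radon–Nikodym. -/
lemma tendsto_integral_exp_of_absolutelyContinuous (ν : Measure ℝ) [IsFiniteMeasure ν]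
    (hν : ν ≪ volume) :
    Tendsto (fun t : ℝ => ∫ y, Complex.exp (Complex.I * ((t * y : ℝ) : ℂ)) ∂ν) atTop (nhds 0) := by
  have h := Real.tendsto_integral_exp_smul_cocompact (E := ℂ)
    (fun y => ((ν.rnDeriv volume y).toReal : ℂ))
  have hc : Tendsto (fun t : ℝ => -(2 * Real.pi)⁻¹ * t) atTop (cocompact ℝ) := by
    rw [cocompact_eq_atBot_atTop]
    exact (tendsto_id.const_mul_atTop_of_neg (neg_neg_of_pos (by positivity))).mono_right le_sup_left
  refine (h.comp hc).congr fun t => ?_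
  rw [← integral_rnDeriv_smul hν]
  refine integral_congr_ae (Eventually.of_forall fun y => ?_)
  simp only [Circle.smul_def, Real.fourierChar_apply, smul_eq_mul, Complex.real_smul]
  rw [mul_comm]
  congr 2
  have : 2 * Real.pi * -(y * (-(2 * Real.pi)⁻¹ * t)) = t * y := by
    field_simp
  rw [this, mul_comm]

lemma norm_exp_phase (x : ℝ) : ‖Complex.exp (Complex.I * (x : ℂ))‖ = 1 :=
  Complex.norm_exp_I_mul_ofReal x

lemma tendsto_integral_max_mul_exp {n : ℕ} {Ω : Set (Fin n → ℝ)} (hΩ : IsOpen Ω)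
    {ω : (Fin n → ℝ) → ℝ} (hω : ContDiffOn ℝ 2 ω Ω) (hgrad : ∀ x ∈ Ω, fderiv ℝ ω x ≠ 0)
    {a : (Fin n → ℝ) → ℝ} (ha : IntegrableOn a Ω) :
    Tendsto (fun t : ℝ => ∫ x in Ω, ((max (a x) 0 : ℝ) : ℂ) *
      Complex.exp (Complex.I * ((t * ω x : ℝ) : ℂ))) atTop (nhds 0) := by
  set μ := (volume.restrict Ω).withDensity (fun x => ENNReal.ofReal (a x)) with hμ
  have hfin : IsFiniteMeasure μ := isFiniteMeasure_withDensity_ofReal ha.2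
  have hμac : μ ≪ volume.restrict Ω := withDensity_absolutelyContinuous _ _
  have hωm : AEMeasurable ω μ :=
    (hω.continuousOn.aemeasurable hΩ.measurableSet).mono_ac hμac
  have hν : μ.map ω ≪ volume := by
    refine Measure.AbsolutelyContinuous.mk fun N hNm hN => ?_
    rw [Measure.map_apply_of_aemeasurable hωm hNm]
    refine hμac ?_
    rw [Measure.restrict_apply' hΩ.measurableSet, Set.inter_comm]
    exact volume_inter_preimage_eq_zero hΩ hω hgrad hNm hN
  refine (tendsto_integral_exp_of_absolutelyContinuous _ hν).congr fun t => ?_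
  rw [integral_map hωm (by fun_prop), hμ, integral_withDensity_eq_integral_toReal_smul₀
    ha.1.aemeasurable.ennreal_ofReal (Eventually.of_forall fun x => ENNReal.ofReal_lt_top)]
  simp only [ENNReal.toReal_ofReal', Complex.real_smul]

lemma MeasureTheory.IntegrableOn.mul_exp_phase {n : ℕ} {Ω : Set (Fin n → ℝ)} {f : (Fin n → ℝ) → ℂ}
    (hf : IntegrableOn f Ω) {θ : (Fin n → ℝ) → ℝ} (hθ : AEMeasurable θ (volume.restrict Ω)) :
    IntegrableOn (fun x => f x * Complex.exp (Complex.I * (θ x : ℂ))) Ω :=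
  Integrable.mul_bdd (c := 1) hf (AEMeasurable.aestronglyMeasurable (by fun_prop))
    (Eventually.of_forall fun x => (norm_exp_phase _).le)

lemma tendsto_integral_ofReal_mul_exp {n : ℕ} {Ω : Set (Fin n → ℝ)} (hΩ : IsOpen Ω)
    {ω : (Fin n → ℝ) → ℝ} (hω : ContDiffOn ℝ 2 ω Ω) (hgrad : ∀ x ∈ Ω, fderiv ℝ ω x ≠ 0)
    {a : (Fin n → ℝ) → ℝ} (ha : IntegrableOn a Ω) :
    Tendsto (fun t : ℝ => ∫ x in Ω, (a x : ℂ) *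
      Complex.exp (Complex.I * ((t * ω x : ℝ) : ℂ))) atTop (nhds 0) := by
  have hlim := (tendsto_integral_max_mul_exp hΩ hω hgrad ha).sub
    (tendsto_integral_max_mul_exp hΩ hω hgrad (a := fun x => -a x) ha.neg)
  rw [sub_zero] at hlim
  refine hlim.congr fun t => ?_
  have hωm : AEMeasurable (fun x => t * ω x) (volume.restrict Ω) :=
    (hω.continuousOn.aemeasurable hΩ.measurableSet).const_mul t
  have h1 : IntegrableOn (fun x => ((max (a x) 0 : ℝ) : ℂ)) Ω := (Integrable.pos_part ha).ofReal
  have h2 : IntegrableOn (fun x => ((max (-a x) 0 : ℝ) : ℂ)) Ω := (Integrable.neg_part ha).ofReal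
  rw [← integral_sub (h1.mul_exp_phase hωm) (h2.mul_exp_phase hωm)]
  refine integral_congr_ae (Eventually.of_forall fun x => ?_)
  have hpm : max (a x) 0 - max (-a x) 0 = a x := by
    rcases le_total (a x) 0 with h | h <;> simp [h]
  beta_reduce
  rw [← sub_mul, ← Complex.ofReal_sub, hpm]

/-- The classical Riemann–Lebesgue lemma for a phase without critical points. -/
lemma tendsto_integral_mul_exp {n : ℕ} {Ω : Set (Fin n → ℝ)} (hΩ : IsOpen Ω)
    {ω : (Fin n → ℝ) → ℝ} (hω : ContDiffOn ℝ 2 ω Ω) (hgrad : ∀ x ∈ Ω, fderiv ℝ ω x ≠ 0)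
    {f : (Fin n → ℝ) → ℂ} (hf : IntegrableOn f Ω) :
    Tendsto (fun t : ℝ => ∫ x in Ω, f x *
      Complex.exp (Complex.I * ((t * ω x : ℝ) : ℂ))) atTop (nhds 0) := by
  have hre : IntegrableOn (fun x => (f x).re) Ω := Integrable.re hf
  have him : IntegrableOn (fun x => (f x).im) Ω := Integrable.im hf
  have hlim := (tendsto_integral_ofReal_mul_exp hΩ hω hgrad hre).add
    ((tendsto_integral_ofReal_mul_exp hΩ hω hgrad him).const_mul Complex.I)
  rw [mul_zero, add_zero] at hlim
  refine hlim.congr fun t => ?_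
  have hωm : AEMeasurable (fun x => t * ω x) (volume.restrict Ω) :=
    (hω.continuousOn.aemeasurable hΩ.measurableSet).const_mul t
  have h1 : IntegrableOn (fun x => ((f x).re : ℂ)) Ω := Integrable.ofReal hre
  have h2 : IntegrableOn (fun x => ((f x).im : ℂ)) Ω := Integrable.ofReal him
  rw [← integral_const_mul, ← integral_add (h1.mul_exp_phase hωm)
    ((h2.mul_exp_phase hωm).const_mul Complex.I)]
  refine integral_congr_ae (Eventually.of_forall fun x => ?_)
  beta_reduce
  rw [← mul_assoc, ← add_mul, mul_comm Complex.I, Complex.re_add_im]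

/-! ### Perturbation of the phase -/

lemma norm_integral_mul_exp_le {n : ℕ} {Ω : Set (Fin n → ℝ)} (f : (Fin n → ℝ) → ℂ)
    (θ : (Fin n → ℝ) → ℝ) :
    ‖∫ x in Ω, f x * Complex.exp (Complex.I * (θ x : ℂ))‖ ≤ ∫ x in Ω, ‖f x‖ := by
  refine (norm_integral_le_integral_norm _).trans_eq ?_
  simp only [norm_mul, norm_exp_phase, mul_one]

/-- Cost of replacing the phase `ψ` by `θ`. The function `ψ` need not be measurable: if the first
integrand is not integrable, its integral is `0` and the bound is trivial. -/
lemma norm_integral_mul_exp_sub_le {n : ℕ} {Ω : Set (Fin n → ℝ)} (hΩ : MeasurableSet Ω)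
    {f : (Fin n → ℝ) → ℂ} (hf : IntegrableOn f Ω) {θ ψ : (Fin n → ℝ) → ℝ}
    (hθ : AEMeasurable θ (volume.restrict Ω)) {ε : ℝ} (hε : 0 ≤ ε)
    (h : ∀ x ∈ Ω, |ψ x - θ x| ≤ ε) :
    ‖∫ x in Ω, f x * Complex.exp (Complex.I * (ψ x : ℂ))‖ ≤
      ‖∫ x in Ω, f x * Complex.exp (Complex.I * (θ x : ℂ))‖ + ε * ∫ x in Ω, ‖f x‖ := by
  by_cases hi : IntegrableOn (fun x => f x * Complex.exp (Complex.I * (ψ x : ℂ))) Ω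
  swap
  · rw [integral_undef hi, norm_zero]
    have : 0 ≤ ∫ x in Ω, ‖f x‖ := integral_nonneg fun x => norm_nonneg _
    positivity
  have hi' : IntegrableOn (fun x => f x * Complex.exp (Complex.I * (θ x : ℂ))) Ω :=
    hf.mul_exp_phase hθ
  rw [← sub_le_iff_le_add']
  refine (norm_sub_norm_le _ _).trans ?_
  rw [← integral_sub hi hi', ← integral_const_mul]
  refine norm_integral_le_of_norm_le (hf.norm.const_mul ε) ?_
  filter_upwards [ae_restrict_mem hΩ] with x hx
  have e : f x * Complex.exp (Complex.I * (ψ x : ℂ)) - f x * Complex.exp (Complex.I * (θ x : ℂ)) =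
      f x * Complex.exp (Complex.I * (θ x : ℂ)) *
        (Complex.exp (Complex.I * ((ψ x - θ x : ℝ) : ℂ)) - 1) := by
    rw [mul_sub, mul_one, mul_assoc, ← Complex.exp_add]
    congr 4
    push_cast
    ring
  rw [e, norm_mul, norm_mul, norm_exp_phase, mul_one, mul_comm]
  refine mul_le_mul_of_nonneg_right ?_ (norm_nonneg _)
  exact Real.norm_exp_I_mul_ofReal_sub_one_le.trans (h x hx)

/-! ### Time averages -/

/-- Cesàro means of a bounded function tending to `0`. Measurability is not needed, since the
integral of a function that is not integrable is `0`. -/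
lemma tendsto_cesaro {G : ℝ → ℂ} {M : ℝ} (hM : ∀ t, 0 ≤ t → ‖G t‖ ≤ M)
    (hG : Tendsto G atTop (nhds 0)) :
    Tendsto (fun l : ℝ => (1 / l) • ∫ t in (0 : ℝ)..l, G t) atTop (nhds 0) := by
  have hM0 : 0 ≤ M := (norm_nonneg _).trans (hM 0 le_rfl)
  rw [Metric.tendsto_atTop]
  intro ε hε
  obtain ⟨t₁, ht₁⟩ := Metric.tendsto_atTop.1 hG (ε / 2) (by positivity)
  set t₀ := max t₁ 0 with ht₀
  have ht₀0 : 0 ≤ t₀ := le_max_right _ _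
  refine ⟨t₀ + 2 * M * t₀ / ε + 1, fun l hl => ?_⟩
  have hq : 0 ≤ 2 * M * t₀ / ε := by positivity
  have hl0 : 0 < l := by linarith
  have hMt : M * t₀ < ε / 2 * l := by
    have h1 : 2 * M * t₀ / ε < l := by linarith
    rw [div_lt_iff₀ hε] at h1
    linarith
  rw [dist_zero_right, norm_smul, norm_div, norm_one, Real.norm_of_nonneg hl0.le, one_div,
    inv_mul_lt_iff₀ hl0]
  by_cases hi : IntervalIntegrable G volume 0 l
  swap
  · rw [intervalIntegral.integral_undef hi, norm_zero]
    positivity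
  have hmem : t₀ ∈ Set.uIcc 0 l := by
    rw [Set.uIcc_of_le hl0.le]
    exact ⟨ht₀0, by linarith⟩
  rw [← intervalIntegral.integral_add_adjacent_intervals
    (hi.mono_set (Set.uIcc_subset_uIcc Set.left_mem_uIcc hmem))
    (hi.mono_set (Set.uIcc_subset_uIcc hmem Set.right_mem_uIcc))]
  have h1 : ‖∫ t in (0 : ℝ)..t₀, G t‖ ≤ M * |t₀ - 0| := by
    refine intervalIntegral.norm_integral_le_of_norm_le_const fun t ht => ?_
    rw [Set.uIoc_of_le ht₀0] at ht
    exact hM t ht.1.le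
  have h2 : ‖∫ t in t₀..l, G t‖ ≤ ε / 2 * |l - t₀| := by
    refine intervalIntegral.norm_integral_le_of_norm_le_const fun t ht => ?_
    rw [Set.uIoc_of_le (by linarith)] at ht
    simpa using (ht₁ t ((le_max_left _ _).trans ht.1.le)).le
  rw [sub_zero, abs_of_nonneg ht₀0] at h1
  rw [abs_of_nonneg (by linarith)] at h2
  have h3 : ε / 2 * (l - t₀) ≤ ε / 2 * l := by
    apply mul_le_mul_of_nonneg_left _ (by positivity)
    linarith
  linarith [norm_add_le (∫ t in (0 : ℝ)..t₀, G t) (∫ t in t₀..l, G t)]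

lemma exists_mem_partition {p : ℕ} {τ : ℕ → ℝ} {s : ℝ} (h0 : τ 0 ≤ s) (hp : s < τ p) :
    ∃ j < p, τ j ≤ s ∧ s < τ (j + 1) := by
  induction p with
  | zero => exact absurd hp h0.not_gt
  | succ k ih =>
    by_cases hk : s < τ k
    · obtain ⟨j, hj, h⟩ := ih hk
      exact ⟨j, hj.trans (Nat.lt_succ_self k), h⟩
    · exact ⟨k, Nat.lt_succ_self k, not_lt.1 hk, hp⟩

/-- Riemann–Lebesgue lemma in time-average form.  `F(I,t)` is `T`-periodic
and piecewise constant in `t` (taking the value `Fj j I` on `[τ j, τ (j+1)) mod T`) with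
each slice in `L¹(Ω)`, and the phase average `(1/t)∫₀^t φ(I,s)ds` approaches a `C²`
frequency `ω` with nonvanishing gradient at rate `o(1/t)` uniformly in `I`.  Then the
time-averaged oscillatory integral tends to zero. -/
theorem riemann_lebesgue_time_average
    {n : ℕ} (Ω : Set (Fin n → ℝ)) (hΩ : IsOpen Ω)
    (p : ℕ) (hp : 0 < p) (T : ℝ) (hT : 0 < T)
    (τ : ℕ → ℝ) (hτ0 : τ 0 = 0) (hτT : τ p = T)
    (hτmono : ∀ i < p, τ i < τ (i + 1))
    (F : (Fin n → ℝ) → ℝ → ℂ) (Fj : ℕ → (Fin n → ℝ) → ℂ)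
    (hFL1 : ∀ j < p, IntegrableOn (Fj j) Ω)
    (hFper : ∀ I ∈ Ω, ∀ t : ℝ, 0 ≤ t → F I (t + T) = F I t)
    (hFpc : ∀ I ∈ Ω, ∀ t : ℝ, 0 ≤ t → ∀ j < p,
      τ j ≤ t - (⌊t / T⌋ : ℝ) * T → t - (⌊t / T⌋ : ℝ) * T < τ (j + 1) → F I t = Fj j I)
    (φ : (Fin n → ℝ) → ℝ → ℝ)
    (hφmeas : ∀ I ∈ Ω, Measurable (φ I))
    (hφint : ∀ I ∈ Ω, ∀ t : ℝ, 0 ≤ t → IntervalIntegrable (φ I) volume 0 t)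
    (ω : (Fin n → ℝ) → ℝ) (hω : ContDiffOn ℝ 2 ω Ω)
    (hωgrad : ∀ I ∈ Ω, fderiv ℝ ω I ≠ 0)
    (hphase : ∀ ε > 0, ∃ t₀ : ℝ, ∀ t ≥ t₀, ∀ I ∈ Ω,
      |(∫ s in (0:ℝ)..t, φ I s) - t * ω I| < ε) :
    Tendsto
      (fun l : ℝ => (1 / l) •
        ∫ t in (0:ℝ)..l, ∫ I in Ω,
          F I t * Complex.exp (Complex.I * ((∫ s in (0:ℝ)..t, φ I s) : ℝ)))
      atTop (nhds 0) := by
  have hnn : ∀ j, 0 ≤ ∫ I in Ω, ‖Fj j I‖ := fun j => integral_nonneg fun _ => norm_nonneg _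
  have hωm : AEMeasurable ω (volume.restrict Ω) := hω.continuousOn.aemeasurable hΩ.measurableSet
  -- At each time a single slice, the same for all `I`, represents `F`.
  have hslice : ∀ t : ℝ, 0 ≤ t → ∃ j < p, ∀ θ : (Fin n → ℝ) → ℝ,
      ∫ I in Ω, F I t * Complex.exp (Complex.I * (θ I : ℂ)) =
        ∫ I in Ω, Fj j I * Complex.exp (Complex.I * (θ I : ℂ)) := by
    intro t ht
    have h0 : τ 0 ≤ t - (⌊t / T⌋ : ℝ) * T := by
      have := (le_div_iff₀ hT).1 (Int.floor_le (t / T))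
      linarith
    have h1 : t - (⌊t / T⌋ : ℝ) * T < τ p := by
      have := (div_lt_iff₀ hT).1 (Int.lt_floor_add_one (t / T))
      linarith
    obtain ⟨j, hj, hj1, hj2⟩ := exists_mem_partition h0 h1
    refine ⟨j, hj, fun θ => setIntegral_congr_fun hΩ.measurableSet fun I hI => ?_⟩
    simp only [hFpc I hI t ht j hj hj1 hj2]
  refine tendsto_cesaro (M := ∑ j ∈ range p, ∫ I in Ω, ‖Fj j I‖) (fun t ht => ?_) ?_
  · obtain ⟨j, hj, h⟩ := hslice t ht
    rw [h]
    exact (norm_integral_mul_exp_le _ _).trans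
      (single_le_sum (f := fun j => ∫ I in Ω, ‖Fj j I‖) (fun i _ => hnn i) (mem_range.2 hj))
  have hA : Tendsto (fun t : ℝ => ∑ j ∈ range p,
      ‖∫ I in Ω, Fj j I * Complex.exp (Complex.I * ((t * ω I : ℝ) : ℂ))‖) atTop (nhds 0) := by
    rw [← sum_const_zero (s := range p)]
    refine tendsto_finsetSum _ fun j hj => ?_
    simpa using (tendsto_integral_mul_exp hΩ hω hωgrad (hFL1 j (mem_range.1 hj))).norm
  set S := ∑ j ∈ range p, ∫ I in Ω, ‖Fj j I‖ with hS
  have hS0 : 0 ≤ S := sum_nonneg fun j _ => hnn j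
  rw [Metric.tendsto_atTop]
  intro ε hε
  -- With phase error `δ = ε / (2 * (S + 1))` the total replacement cost `δ * S` is at most `ε / 2`.
  have hδ : 0 < ε / (2 * (S + 1)) := by positivity
  obtain ⟨t₁, ht₁⟩ := hphase _ hδ
  obtain ⟨t₂, ht₂⟩ := Metric.tendsto_atTop.1 hA (ε / 2) (by positivity)
  refine ⟨max (max t₁ t₂) 0, fun t ht => ?_⟩
  have ht1 : t₁ ≤ t := ((le_max_left _ _).trans (le_max_left _ _)).trans ht
  have ht2 : t₂ ≤ t := ((le_max_right _ _).trans (le_max_left _ _)).trans ht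
  obtain ⟨j, hj, h⟩ := hslice t ((le_max_right _ _).trans ht)
  rw [dist_zero_right, h]
  have hb := norm_integral_mul_exp_sub_le hΩ.measurableSet (hFL1 j hj)
    (θ := fun I => t * ω I) (ψ := fun I => ∫ s in (0:ℝ)..t, φ I s) (hωm.const_mul t) hδ.le
    (fun I hI => (ht₁ t ht1 I hI).le)
  have hA1 := ht₂ t ht2
  rw [dist_zero_right, Real.norm_of_nonneg (sum_nonneg fun _ _ => norm_nonneg _)] at hA1
  have hA2 := single_le_sum (f := fun j =>
    ‖∫ I in Ω, Fj j I * Complex.exp (Complex.I * ((t * ω I : ℝ) : ℂ))‖)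
    (fun i _ => norm_nonneg _) (mem_range.2 hj)
  have hS1 : ∫ I in Ω, ‖Fj j I‖ ≤ S :=
    single_le_sum (f := fun j => ∫ I in Ω, ‖Fj j I‖) (fun i _ => hnn i) (mem_range.2 hj)
  have hc : ε / (2 * (S + 1)) * ∫ I in Ω, ‖Fj j I‖ ≤ ε / 2 := by
    calc ε / (2 * (S + 1)) * ∫ I in Ω, ‖Fj j I‖ ≤ ε / (2 * (S + 1)) * (S + 1) := by
          apply mul_le_mul_of_nonneg_left _ hδ.le
          linarith
      _ = ε / 2 := by field_simp
  linarith
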